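/- For every complex number s with Re(s) > −2, the series ∑_{n=1}^∞ n^{−(s+4)} · ((2/π) ∫₀^π sin(nθ)⁴/sin(θ)² dθ) converges absolutely and equals ζ(s+3). (This is the quadruple convolution mean value ∫_{SU(2)} ζ_{SU(2)}(s,(g,g,g,g)) dg = ζ(s+3).) -/

import Mathlib

open Real

/-!
On the torus the character of `Sym^{n-1}` is `sin (nθ) / sin θ`, and the Clebsch–Gordan rule
decomposes its square as `∑_{j < n} sin ((2j+1)θ) / sin θ`, a sum of `n` distinct irreducible
characters. Cancelling `sin θ` from the Weyl density, `sin⁴(nθ) / sin² θ` is the square of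
`∑_{j < n} sin ((2j+1)θ)`. By orthogonality of the sines its mean value is `n`, so the series is
`∑ n^{-(s+4)} · n = ζ(s+3)`.
-/

theorem sin_mul_sum_range_sin_odd_mul (n : ℕ) (θ : ℝ) :
    sin θ * ∑ j ∈ Finset.range n, sin ((2 * j + 1 : ℕ) * θ) = sin (n * θ) ^ 2 := by
  have telescoping_term (j : ℕ) : 2 * sin θ * sin ((2 * j + 1 : ℕ) * θ)
      = cos (2 * (j * θ)) - cos (2 * ((j + 1 : ℕ) * θ)) := by
    rw [mul_right_comm, two_mul_sin_mul_sin]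
    congr 2 <;> push_cast <;> ring
  suffices 2 * sin θ * ∑ j ∈ Finset.range n, sin ((2 * j + 1 : ℕ) * θ) = 2 * sin (n * θ) ^ 2 by
    linarith
  calc 2 * sin θ * ∑ j ∈ Finset.range n, sin ((2 * j + 1 : ℕ) * θ)
      = ∑ j ∈ Finset.range n, (cos (2 * (j * θ)) - cos (2 * ((j + 1 : ℕ) * θ))) := by
        rw [Finset.mul_sum, Finset.sum_congr rfl fun j _ => telescoping_term j]
    _ = 1 - cos (2 * (n * θ)) := by
        rw [Finset.sum_range_sub' fun j : ℕ => cos (2 * (j * θ))]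
        simp
    _ = 2 * sin (n * θ) ^ 2 := by rw [cos_two_mul, cos_sq']; ring

theorem sin_nat_mul_pow_four_div_sin_sq (n : ℕ) (θ : ℝ) :
    sin (n * θ) ^ 4 / sin θ ^ 2 = (∑ j ∈ Finset.range n, sin ((2 * j + 1 : ℕ) * θ)) ^ 2 := by
  rcases eq_or_ne (sin θ) 0 with hθ | hθ
  · -- Here the left side is the junk value `0 / 0 = 0`, and every sine on the right vanishes too.
    obtain ⟨k, rfl⟩ := sin_eq_zero_iff.mp hθ
    have sin_nat_mul_eq_zero (m : ℕ) : sin (m * (k * π)) = 0 := by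
      simpa [mul_assoc] using sin_int_mul_pi (m * k)
    simp only [hθ, sin_nat_mul_eq_zero, Finset.sum_const_zero, zero_pow two_ne_zero, div_zero]
  · rw [div_eq_iff (pow_ne_zero 2 hθ), ← mul_pow, mul_comm _ (sin θ),
      sin_mul_sum_range_sin_odd_mul, ← pow_mul]

theorem integral_cos_int_mul (n : ℤ) :
    ∫ θ in (0 : ℝ)..π, cos (n * θ) = if n = 0 then π else 0 := by
  split_ifs with hn
  · simp [hn]
  · simpa only [Polynomial.Chebyshev.integral_measureT_eq_integral_cos,
      Polynomial.Chebyshev.T_real_cos] using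
      Polynomial.Chebyshev.integral_eval_T_real_measureT_of_ne_zero hn

theorem integral_sin_nat_mul_mul_sin_nat_mul (m : ℕ) {n : ℕ} (hn : n ≠ 0) :
    ∫ θ in (0 : ℝ)..π, sin (m * θ) * sin (n * θ) = if m = n then π / 2 else 0 := by
  have product_to_sum (θ : ℝ) : sin (m * θ) * sin (n * θ)
      = (cos ((m - n : ℤ) * θ) - cos ((m + n : ℤ) * θ)) / 2 := by
    push_cast
    rw [sub_mul, add_mul, ← two_mul_sin_mul_sin]
    ring
  simp only [product_to_sum]
  rw [intervalIntegral.integral_div, intervalIntegral.integral_sub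
      (Continuous.intervalIntegrable (by fun_prop) _ _)
      (Continuous.intervalIntegrable (by fun_prop) _ _),
    integral_cos_int_mul, integral_cos_int_mul, if_neg (by lia : (m + n : ℤ) ≠ 0), sub_zero]
  simp only [sub_eq_zero, Nat.cast_inj, ite_div, zero_div]

theorem integral_sq_sum_mul_sin_nat_mul {ι : Type*} (s : Finset ι) (a : ι → ℝ) {f : ι → ℕ}
    (hinj : Set.InjOn f s) (hf : ∀ i ∈ s, f i ≠ 0) :
    ∫ θ in (0 : ℝ)..π, (∑ i ∈ s, a i * sin (f i * θ)) ^ 2 = π / 2 * ∑ i ∈ s, a i ^ 2 := by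
  classical
  have orthogonality {i j : ι} (hi : i ∈ s) (hj : j ∈ s) :
      ∫ θ in (0 : ℝ)..π, a i * sin (f i * θ) * (a j * sin (f j * θ))
        = if i = j then π / 2 * a i ^ 2 else 0 := by
    simp only [mul_mul_mul_comm (a i)]
    rw [intervalIntegral.integral_const_mul, integral_sin_nat_mul_mul_sin_nat_mul _ (hf j hj)]
    rcases eq_or_ne i j with rfl | hij
    · simp only [if_true]
      ring
    · rw [if_neg (hinj.ne hi hj hij), if_neg hij, mul_zero]
  calc ∫ θ in (0 : ℝ)..π, (∑ i ∈ s, a i * sin (f i * θ)) ^ 2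
      = ∑ i ∈ s, ∑ j ∈ s, ∫ θ in (0 : ℝ)..π, a i * sin (f i * θ) * (a j * sin (f j * θ)) := by
        simp only [sq, Finset.sum_mul_sum]
        rw [intervalIntegral.integral_finsetSum
          fun i _ => Continuous.intervalIntegrable (by fun_prop) _ _]
        exact Finset.sum_congr rfl fun i _ => intervalIntegral.integral_finsetSum
          fun j _ => Continuous.intervalIntegrable (by fun_prop) _ _
    _ = ∑ i ∈ s, ∑ j ∈ s, if i = j then π / 2 * a i ^ 2 else 0 :=
        Finset.sum_congr rfl fun i hi => Finset.sum_congr rfl fun j hj => orthogonality hi hj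
    _ = π / 2 * ∑ i ∈ s, a i ^ 2 := by
        rw [Finset.mul_sum]
        exact Finset.sum_congr rfl fun i hi => by rw [Finset.sum_ite_eq, if_pos hi]

theorem integral_sin_nat_mul_pow_four_div_sin_sq (n : ℕ) :
    ∫ θ in (0 : ℝ)..π, sin (n * θ) ^ 4 / sin θ ^ 2 = π / 2 * n := by
  have odd_injective : Function.Injective fun j : ℕ => 2 * j + 1 := fun i j h => by lia
  simpa only [sin_nat_mul_pow_four_div_sin_sq, one_mul, one_pow, Finset.sum_const,
    Finset.card_range, nsmul_eq_mul, mul_one] using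
    integral_sq_sum_mul_sin_nat_mul (Finset.range n) (fun _ => 1) odd_injective.injOn
      fun j _ => Nat.succ_ne_zero (2 * j)

theorem cpow_neg_add_one_mul_self {z : ℂ} (hz : z ≠ 0) (w : ℂ) :
    z ^ (-(w + 1)) * z = 1 / z ^ w := by
  rw [one_div, ← Complex.cpow_neg, neg_add', Complex.cpow_sub _ _ hz, Complex.cpow_one,
    div_mul_cancel₀ _ hz]

/-- The quadruple convolution mean value of the Witten L-function of SU(2):
for `Re(s) > −2`, the series
`∑_{n≥1} n^{-(s+4)} · (2/π)∫₀^π sin(nθ)⁴/sin²θ dθ`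
converges absolutely and equals `ζ(s+3)`. -/
theorem quadruple_convolution_mean_value (s : ℂ) (hs : -2 < s.re) :
    Summable (fun n : ℕ => ‖((n : ℂ) + 1) ^ (-(s + 4))
      * (((2 / π) * ∫ θ in (0:ℝ)..π,
          (Real.sin (((n : ℝ) + 1) * θ)) ^ 4 / (Real.sin θ) ^ 2 : ℝ) : ℂ)‖) ∧
    ∑' n : ℕ, ((n : ℂ) + 1) ^ (-(s + 4))
        * (((2 / π) * ∫ θ in (0:ℝ)..π,
            (Real.sin (((n : ℝ) + 1) * θ)) ^ 4 / (Real.sin θ) ^ 2 : ℝ) : ℂ)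
      = riemannZeta (s + 3) := by
  have hre : 1 < (s + 3).re := by
    simp only [Complex.add_re, Complex.re_ofNat]
    linarith
  have mean_value (n : ℕ) : (2 / π) * ∫ θ in (0 : ℝ)..π,
      sin (((n : ℝ) + 1) * θ) ^ 4 / sin θ ^ 2 = (n : ℝ) + 1 := by
    rw [← Nat.cast_add_one, integral_sin_nat_mul_pow_four_div_sin_sq]
    field_simp
  have term_eq (n : ℕ) : ((n : ℂ) + 1) ^ (-(s + 4)) * (((n : ℝ) + 1 : ℝ) : ℂ)
      = 1 / ((n : ℂ) + 1) ^ (s + 3) := by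
    rw [← cpow_neg_add_one_mul_self (Nat.cast_add_one_ne_zero n), show s + 3 + 1 = s + 4 by ring]
    push_cast
    rfl
  simp only [mean_value, term_eq]
  refine ⟨?_, (zeta_eq_tsum_one_div_nat_add_one_cpow hre).symm⟩
  simpa only [Nat.cast_add_one] using
    ((summable_nat_add_iff 1).mpr (Complex.summable_one_div_nat_cpow.mpr hre)).norm
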